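/- (Retrospective reweighting preserves unbiasedness.) Let S and A be finite nonempty types, P : S → A → PMF S a transition kernel, R : S → A → ℝ a reward function, γ ∈ ℝ a discount, g : S → ℝ a terminal value, T ≥ 1, and s₁ ∈ S. Let π, π' : S → PMF A be policies and π̂ : S → PMF A a proposal with π̂(s)(a) > 0 whenever π(s)(a) > 0 or π'(s)(a) > 0. For a length-T trajectory τ = (s₁,a₁,…,s_T,a_T,s_{T+1}) with Prob_{π̂}(τ) > 0, define the retrospectively reweighted importance weight w(τ) = (∏_{t=1}^{T-1} π(s_t)(a_t)/π̂(s_t)(a_t)) · (π'(s_T)(a_T)/π̂(s_T)(a_T)). Define U : S → ℝ by U(s) = ∑_a π'(s)(a)·(R(s,a) + γ·∑_{s'} P(s,a)(s')·g(s')) and define V_h^{π,U} recursively by V_0^{π,U}(s) = U(s) and V_{h+1}^{π,U}(s) = ∑_a π(s)(a)·(R(s,a) + γ·∑_{s'} P(s,a)(s')·V_h^{π,U}(s')). Then ∑_{τ : Prob_{π̂}(τ) > 0} Prob_{π̂}(τ)·w(τ)·(∑_{t=1}^T γ^{t-1}·R(s_t,a_t) + γ^T·g(s_{T+1})) = V_{T-1}^{π,U}(s₁);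 that is, the reweighted estimator is unbiased for the value of the policy that follows π for the first T−1 steps and takes its step-T action from π'. -/

import Mathlib

/-!
Since `πhat` charges every action charged by `π` or `π'`, each factor `πhat * (target / πhat)` is
just the target probability, and trajectories of zero proposal probability contribute nothing.
The left side is therefore the full expectation of the bootstrapped return under the policy that
uses `π` on the first `T - 1` steps and `π'` on the last one. For a policy indexed by the number of
steps still to go, this expectation is computed by conditioning on the first step
(`sum_trajectories_affine`). The induction carries an arbitrary affine function `c + d * return`:
the first reward enters the remaining return as an additive constant and the discount as a factor,
so the case `d = 0` (total mass one) and the expectation itself are handled together.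
-/

open scoped BigOperators

/-- The state sequence of a length-`T` trajectory determined by the start
state `s₁` and the list of next states `nxt`. -/
def stateSeq {S : Type*} {T : ℕ} (s₁ : S) (nxt : Fin T → S) : ℕ → S
  | 0 => s₁
  | t + 1 => if h : t < T then nxt ⟨t, h⟩ else s₁

/-- The `h`-step value of policy `π` with terminal value `U`:
`V_0^{π,U} = U`, `V_{h+1}^{π,U}(s) = ∑ a, π s a * (R s a + γ * ∑ s', P s a s' * V_h^{π,U} s')`. -/
noncomputable def stepValue {S A : Type*} [Fintype S] [Fintype A]
    (P : S → A → PMF S) (R : S → A → ℝ) (γ : ℝ) (U : S → ℝ)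
    (π : S → PMF A) : ℕ → S → ℝ
  | 0, s => U s
  | h + 1, s =>
      ∑ a, (π s a).toReal *
        (R s a + γ * ∑ s', (P s a s').toReal * stepValue P R γ U π h s')

/-- Value with `k` steps to go and terminal value `g`, where `ρ k` is the policy used when `k`
steps remain. -/
noncomputable def backVal {S A : Type*} [Fintype S] [Fintype A]
    (P : S → A → PMF S) (R : S → A → ℝ) (γ : ℝ) (g : S → ℝ) (ρ : ℕ → S → PMF A) : ℕ → S → ℝ
  | 0, s => g s
  | k + 1, s => ∑ a, (ρ (k + 1) s a).toReal *
      (R s a + γ * ∑ s', (P s a s').toReal * backVal P R γ g ρ k s')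

lemma sum_pmf_toReal {α : Type*} [Fintype α] (p : PMF α) : ∑ a, (p a).toReal = 1 := by
  rw [← ENNReal.toReal_sum (fun a _ => p.apply_ne_top a), ← tsum_fintype (L := .unconditional α),
    p.tsum_coe, ENNReal.toReal_one]

/-- The bound `t ≤ T` is needed because `stateSeq` takes a default value past its end. -/
lemma stateSeq_cons {S : Type*} {T : ℕ} (s s' : S) (nxt : Fin T → S) (t : ℕ) (ht : t ≤ T) :
    stateSeq s (Fin.cons s' nxt : Fin (T + 1) → S) (t + 1) = stateSeq s' nxt t := by
  cases t with
  | zero => simp [stateSeq]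
  | succ k =>
    have hk : k < T := ht
    have h2 : (⟨k + 1, by omega⟩ : Fin (T + 1)) = Fin.succ ⟨k, hk⟩ := rfl
    simp only [stateSeq, hk, Nat.add_lt_add_iff_right, dif_pos]
    rw [h2, Fin.cons_succ]

/-- Sum over trajectories split by the first action and the first transition. -/
lemma sum_trajectories_succ {S A : Type*} [Fintype S] [Fintype A] {T : ℕ}
    (f : (Fin (T + 1) → A) → (Fin (T + 1) → S) → ℝ) :
    ∑ τ : (Fin (T + 1) → A) × (Fin (T + 1) → S), f τ.1 τ.2 =
      ∑ a, ∑ s', ∑ τ : (Fin T → A) × (Fin T → S), f (Fin.cons a τ.1) (Fin.cons s' τ.2) := by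
  rw [Fintype.sum_prod_type, ← (Fin.consEquiv (fun _ => A)).sum_comp, Fintype.sum_prod_type]
  refine Finset.sum_congr rfl fun a _ => ?_
  simp_rw [Fintype.sum_prod_type]
  conv_rhs => rw [Finset.sum_comm]
  refine Finset.sum_congr rfl fun as _ => ?_
  rw [← (Fin.consEquiv (fun _ => S)).sum_comp, Fintype.sum_prod_type]
  rfl

/-- Expectation of an affine function of the bootstrapped return. -/
lemma sum_trajectories_affine {S A : Type*} [Fintype S] [Fintype A]
    (P : S → A → PMF S) (R : S → A → ℝ) (γ : ℝ) (g : S → ℝ) (ρ : ℕ → S → PMF A)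
    (T : ℕ) (c d : ℝ) (s : S) :
    ∑ τ : (Fin T → A) × (Fin T → S),
      (∏ t : Fin T, (ρ (T - t) (stateSeq s τ.2 t) (τ.1 t)).toReal *
        (P (stateSeq s τ.2 t) (τ.1 t) (stateSeq s τ.2 ((t : ℕ) + 1))).toReal) *
      (c + d * ((∑ t : Fin T, γ ^ (t : ℕ) * R (stateSeq s τ.2 t) (τ.1 t)) +
        γ ^ T * g (stateSeq s τ.2 T))) = c + d * backVal P R γ g ρ T s := by
  induction T generalizing c d s with
  | zero => simp [stateSeq, backVal]
  | succ T ih =>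
    rw [sum_trajectories_succ (fun as nxt =>
      (∏ t : Fin (T + 1), (ρ (T + 1 - t) (stateSeq s nxt t) (as t)).toReal *
        (P (stateSeq s nxt t) (as t) (stateSeq s nxt ((t : ℕ) + 1))).toReal) *
      (c + d * ((∑ t : Fin (T + 1), γ ^ (t : ℕ) * R (stateSeq s nxt t) (as t)) +
        γ ^ (T + 1) * g (stateSeq s nxt (T + 1)))))]
    have key : ∀ a s', ∑ τ : (Fin T → A) × (Fin T → S),
        (∏ t : Fin (T + 1), (ρ (T + 1 - t) (stateSeq s (Fin.cons s' τ.2 : Fin (T + 1) → S) t)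
            ((Fin.cons a τ.1 : Fin (T + 1) → A) t)).toReal *
          (P (stateSeq s (Fin.cons s' τ.2 : Fin (T + 1) → S) t)
            ((Fin.cons a τ.1 : Fin (T + 1) → A) t)
            (stateSeq s (Fin.cons s' τ.2 : Fin (T + 1) → S) ((t : ℕ) + 1))).toReal) *
        (c + d * ((∑ t : Fin (T + 1), γ ^ (t : ℕ) *
            R (stateSeq s (Fin.cons s' τ.2 : Fin (T + 1) → S) t)
              ((Fin.cons a τ.1 : Fin (T + 1) → A) t)) +
          γ ^ (T + 1) * g (stateSeq s (Fin.cons s' τ.2 : Fin (T + 1) → S) (T + 1)))) =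
        (ρ (T + 1) s a).toReal * ((P s a s').toReal *
          ((c + d * R s a) + d * γ * backVal P R γ g ρ T s')) := by
      intro a s'
      rw [← ih, Finset.mul_sum, Finset.mul_sum]
      refine Finset.sum_congr rfl fun τ _ => ?_
      rw [Fin.prod_univ_succ, Fin.sum_univ_succ, stateSeq_cons s s' τ.2 T le_rfl]
      have hc : ∀ i : Fin T, stateSeq s (Fin.cons s' τ.2 : Fin (T + 1) → S) ((i : ℕ) + 1) =
          stateSeq s' τ.2 i := fun i => stateSeq_cons s s' τ.2 i i.2.le
      have hc' : ∀ i : Fin T, stateSeq s (Fin.cons s' τ.2 : Fin (T + 1) → S) ((i : ℕ) + 1 + 1) =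
          stateSeq s' τ.2 ((i : ℕ) + 1) := fun i => stateSeq_cons s s' τ.2 _ i.2
      have h0 : stateSeq s (Fin.cons s' τ.2 : Fin (T + 1) → S) 0 = s := rfl
      have h1 : stateSeq s (Fin.cons s' τ.2 : Fin (T + 1) → S) (0 + 1) = s' :=
        stateSeq_cons s s' τ.2 0 (Nat.zero_le _)
      simp only [Fin.val_succ, Fin.val_zero, Fin.cons_succ, Fin.cons_zero, hc, hc', h0, h1,
        Nat.add_sub_add_right, Nat.sub_zero, pow_zero, one_mul]
      have hs : ∑ i : Fin T, γ ^ ((i : ℕ) + 1) * R (stateSeq s' τ.2 i) (τ.1 i) =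
          γ * ∑ i : Fin T, γ ^ (i : ℕ) * R (stateSeq s' τ.2 i) (τ.1 i) := by
        rw [Finset.mul_sum]
        exact Finset.sum_congr rfl fun i _ => by ring
      rw [hs]
      ring
    simp_rw [key, ← Finset.mul_sum]
    have hP : ∀ a, ∑ s', (P s a s').toReal *
        ((c + d * R s a) + d * γ * backVal P R γ g ρ T s') =
        c + d * (R s a + γ * ∑ s', (P s a s').toReal * backVal P R γ g ρ T s') := by
      intro a
      simp_rw [mul_add (P s a _).toReal (c + d * R s a), Finset.sum_add_distrib, ← Finset.sum_mul,
        sum_pmf_toReal, mul_left_comm _ (d * γ), ← Finset.mul_sum]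
      ring
    simp_rw [hP, mul_add _ c, Finset.sum_add_distrib, ← Finset.sum_mul, sum_pmf_toReal,
      mul_left_comm _ d, ← Finset.mul_sum, one_mul]
    rfl

/-- With `π'` at the last step and `π` before it, the last backup produces `U`. -/
lemma backVal_eq_stepValue {S A : Type*} [Fintype S] [Fintype A]
    (P : S → A → PMF S) (R : S → A → ℝ) (γ : ℝ) (g : S → ℝ) (π π' : S → PMF A) (U : S → ℝ)
    (hU : ∀ s, U s = ∑ a, (π' s a).toReal *
      (R s a + γ * ∑ s', (P s a s').toReal * g s')) (n : ℕ) (s : S) :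
    backVal P R γ g (fun k => if k = 1 then π' else π) (n + 1) s =
      stepValue P R γ U π n s := by
  induction n generalizing s with
  | zero => simp [backVal, stepValue, hU]
  | succ n ih =>
    rw [backVal, stepValue]
    simp_rw [ih]
    simp

/-- Retrospective reweighting preserves unbiasedness: with importance weights
that use the target `π` on the first `T - 1` steps and the retrospective
target `π'` on the final step `T` (0-indexed: step `t` with `t + 1 = T`),
the weighted expected bootstrapped return under the proposal `πhat` equals
`V_{T-1}^{π,U}(s₁)`, the value of the policy that follows `π` for the first
`T - 1` steps and takes its step-`T` action from `π'`. -/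
theorem retrospective_reweighting_unbiased {S A : Type*}
    [Fintype S] [Fintype A] [Nonempty S] [Nonempty A]
    (P : S → A → PMF S) (R : S → A → ℝ) (γ : ℝ) (g : S → ℝ)
    (T : ℕ) (hT : 1 ≤ T) (s₁ : S)
    (π π' πhat : S → PMF A)
    (hsupp : ∀ s a, 0 < (π s a).toReal ∨ 0 < (π' s a).toReal →
      0 < (πhat s a).toReal)
    (U : S → ℝ)
    (hU : ∀ s, U s = ∑ a, (π' s a).toReal *
      (R s a + γ * ∑ s', (P s a s').toReal * g s')) :
    ∑ τ ∈ Finset.univ.filter (fun τ : (Fin T → A) × (Fin T → S) =>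
        0 < ∏ t : Fin T,
          (πhat (stateSeq s₁ τ.2 t) (τ.1 t)).toReal *
            (P (stateSeq s₁ τ.2 t) (τ.1 t) (stateSeq s₁ τ.2 ((t : ℕ) + 1))).toReal),
      (∏ t : Fin T,
        (πhat (stateSeq s₁ τ.2 t) (τ.1 t)).toReal *
          (P (stateSeq s₁ τ.2 t) (τ.1 t) (stateSeq s₁ τ.2 ((t : ℕ) + 1))).toReal) *
      (∏ t : Fin T,
        (if (t : ℕ) + 1 = T then (π' (stateSeq s₁ τ.2 t) (τ.1 t)).toReal
          else (π (stateSeq s₁ τ.2 t) (τ.1 t)).toReal) /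
          (πhat (stateSeq s₁ τ.2 t) (τ.1 t)).toReal) *
      ((∑ t : Fin T, γ ^ (t : ℕ) * R (stateSeq s₁ τ.2 t) (τ.1 t)) +
        γ ^ T * g (stateSeq s₁ τ.2 T))
      = stepValue P R γ U π (T - 1) s₁ := by
  classical
  set ρ : ℕ → S → PMF A := fun k => if k = 1 then π' else π with hρ
  -- Dropping the support restriction is harmless: the extra terms have a zero product.
  rw [Finset.sum_filter_of_ne]
  swap
  · intro τ _ hne
    refine lt_of_le_of_ne (Finset.prod_nonneg fun t _ => by positivity) fun h0 => hne ?_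
    rw [← h0, zero_mul, zero_mul]
  obtain ⟨n, rfl⟩ : ∃ n, T = n + 1 := ⟨T - 1, by omega⟩
  have h := sum_trajectories_affine P R γ g ρ (n + 1) 0 1 s₁
  simp only [zero_add, one_mul] at h
  rw [Nat.add_sub_cancel, ← backVal_eq_stepValue P R γ g π π' U hU n s₁, ← h]
  refine Finset.sum_congr rfl fun τ _ => ?_
  rw [← Finset.prod_mul_distrib]
  congr 1
  refine Finset.prod_congr rfl fun t _ => ?_
  have ht : (ρ (n + 1 - t) (stateSeq s₁ τ.2 t) (τ.1 t)).toReal =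
      if (t : ℕ) + 1 = n + 1 then (π' (stateSeq s₁ τ.2 t) (τ.1 t)).toReal
        else (π (stateSeq s₁ τ.2 t) (τ.1 t)).toReal := by
    have hlt := t.2
    by_cases hl : (t : ℕ) + 1 = n + 1
    · have h1 : n + 1 - (t : ℕ) = 1 := by omega
      rw [if_pos hl, h1, hρ]
      simp
    · have h1 : n + 1 - (t : ℕ) ≠ 1 := by omega
      rw [if_neg hl, hρ]
      simp [h1]
  rw [ht]
  have hs := hsupp (stateSeq s₁ τ.2 t) (τ.1 t)
  by_cases h0 : (πhat (stateSeq s₁ τ.2 t) (τ.1 t)).toReal = 0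
    -- Here `x / 0 = 0` in the weight, and the target probability vanishes too by `hsupp`.
  · rw [h0] at hs
    have h1 : (π (stateSeq s₁ τ.2 t) (τ.1 t)).toReal = 0 :=
      le_antisymm (not_lt.1 fun hp => lt_irrefl _ (hs (Or.inl hp))) ENNReal.toReal_nonneg
    have h2 : (π' (stateSeq s₁ τ.2 t) (τ.1 t)).toReal = 0 :=
      le_antisymm (not_lt.1 fun hp => lt_irrefl _ (hs (Or.inr hp))) ENNReal.toReal_nonneg
    simp [h0, h1, h2]
  · field_simp
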